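/- arXiv:2512.18837 — 2 statements merged into one kernel-verified Lean document; each statement's English description precedes it below -/
import Mathlib

section
/- Let H be a real inner product space, Π the orthogonal projection onto a complete subspace of H, η ≥ 0, g : [0, ∞) → H, and y : [0, ∞) → ℝ differentiable. Assume for all t ≥ 0: (i) y′(t) ≤ −‖Π g(t)‖², (ii) y(t) ≤ ‖g(t)‖², and (iii) ‖g(t) − Π g(t)‖ ≤ η. Then for every t ≥ 0, y(t) ≤ y(0)·e^{−t} + η²·(1 − e^{−t}). -/
/-- Proposition 1, analytic content: if `y′(t) ≤ −‖Π g(t)‖²`,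
`y(t) ≤ ‖g(t)‖²` and `‖g(t) − Π g(t)‖ ≤ η` for all `t ≥ 0`, where `Π` is the
orthogonal projection onto a complete subspace, then
`y(t) ≤ y(0) e^{−t} + η² (1 − e^{−t})`. -/
theorem kswgd_truncated_convergence
    {H : Type*} [NormedAddCommGroup H] [InnerProductSpace ℝ H]
    (K : Submodule ℝ H) [CompleteSpace K]
    (η : ℝ) (hη : 0 ≤ η)
    (g : ℝ → H) (y : ℝ → ℝ) (hy : Differentiable ℝ y)
    (hdiss : ∀ t, 0 ≤ t → deriv y t ≤ -‖(Submodule.orthogonalProjectionOnto K (g t) : H)‖ ^ 2)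
    (hKLchi : ∀ t, 0 ≤ t → y t ≤ ‖g t‖ ^ 2)
    (htail : ∀ t, 0 ≤ t → ‖g t - (Submodule.orthogonalProjectionOnto K (g t) : H)‖ ≤ η) :
    ∀ t, 0 ≤ t →
      y t ≤ y 0 * Real.exp (-t) + η ^ 2 * (1 - Real.exp (-t)) := by
  have key : ∀ t, 0 ≤ t → deriv y t + (y t - η ^ 2) ≤ 0 := by
    intro t ht
    have h1 := hdiss t ht
    have h2 := hKLchi t ht
    have h3 : ‖g t - (Submodule.orthogonalProjectionOnto K (g t) : H)‖ ^ 2 ≤ η ^ 2 :=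
      pow_le_pow_left₀ (norm_nonneg _) (htail t ht) 2
    have h4 := Submodule.norm_sq_eq_add_norm_sq_starProjection (g t) K
    rw [Submodule.starProjection_orthogonal_val] at h4
    simp only [Submodule.starProjection_apply] at h4
    linarith
  have hd : ∀ t, HasDerivAt (fun s => (y s - η ^ 2) * Real.exp s)
      (deriv y t * Real.exp t + (y t - η ^ 2) * Real.exp t) t := fun t =>
    ((hy t).hasDerivAt.sub_const (η ^ 2)).mul (Real.hasDerivAt_exp t)
  have hanti : AntitoneOn (fun s => (y s - η ^ 2) * Real.exp s) (Set.Ici 0) := by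
    refine antitoneOn_of_hasDerivWithinAt_nonpos (convex_Ici 0)
      (fun t _ => (hd t).continuousAt.continuousWithinAt)
      (fun t _ => (hd t).hasDerivWithinAt) ?_
    intro t ht
    rw [← add_mul]
    exact mul_nonpos_of_nonpos_of_nonneg (key t (interior_subset ht)) (Real.exp_pos t).le
  intro t ht
  have h := hanti (Set.mem_Ici.2 le_rfl) (Set.mem_Ici.2 ht) ht
  simp only [Real.exp_zero, mul_one] at h
  have h5 := mul_le_mul_of_nonneg_right h (Real.exp_pos (-t)).le
  rw [mul_assoc, ← Real.exp_add, add_neg_cancel, Real.exp_zero, mul_one] at h5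
  linarith
end

section
/- Let H be a real inner product space, Π the orthogonal projection onto a complete subspace of H, η ≥ 0, 0 ≤ ε < 1, g : [0, ∞) → H, δ : [0, ∞) → H, and y : [0, ∞) → ℝ differentiable. Assume for all t ≥ 0: (i) y′(t) ≤ −⟨g(t), Π g(t)⟩ − ⟨g(t), δ(t)⟩, (ii) |⟨g(t), δ(t)⟩| ≤ ε ‖g(t)‖², (iii) ‖g(t) − Π g(t)‖ ≤ η, and (iv) y(t) ≤ ‖g(t)‖². Then for every t ≥ 0, y(t) ≤ e^{−(1−ε) t}·y(0) + (η²/(1−ε))·(1 − e^{−(1−ε) t}). -/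
/-- Theorem 1, analytic content: if `y′(t) ≤ −⟨g(t), Π g(t)⟩ − ⟨g(t), δ(t)⟩`,
`|⟨g(t), δ(t)⟩| ≤ ε ‖g(t)‖²`, `‖g(t) − Π g(t)‖ ≤ η`, and `y(t) ≤ ‖g(t)‖²` for all `t ≥ 0`,
with `0 ≤ ε < 1` and `η ≥ 0`, then
`y(t) ≤ e^{−(1−ε)t} y(0) + (η²/(1−ε)) (1 − e^{−(1−ε)t})`. -/
theorem kswgd_data_driven_error_bound
    {H : Type*} [NormedAddCommGroup H] [InnerProductSpace ℝ H]
    (K : Submodule ℝ H) [CompleteSpace K]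
    (η ε : ℝ) (hη : 0 ≤ η) (hε0 : 0 ≤ ε) (hε1 : ε < 1)
    (g δ : ℝ → H) (y : ℝ → ℝ) (hy : Differentiable ℝ y)
    (hdiss : ∀ t, 0 ≤ t →
      deriv y t ≤ -(inner ℝ (g t) ((K.orthogonalProjectionOnto (g t) : H)) : ℝ)
                    - (inner ℝ (g t) (δ t) : ℝ))
    (hδ : ∀ t, 0 ≤ t → |(inner ℝ (g t) (δ t) : ℝ)| ≤ ε * ‖g t‖ ^ 2)
    (htail : ∀ t, 0 ≤ t → ‖g t - (K.orthogonalProjectionOnto (g t) : H)‖ ≤ η)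
    (hKLchi : ∀ t, 0 ≤ t → y t ≤ ‖g t‖ ^ 2) :
    ∀ t, 0 ≤ t →
      y t ≤ Real.exp (-(1 - ε) * t) * y 0
            + (η ^ 2 / (1 - ε)) * (1 - Real.exp (-(1 - ε) * t)) := by
  have hc : 0 < 1 - ε := by linarith
  have key : ∀ t, 0 ≤ t → deriv y t ≤ -(1 - ε) * y t + η ^ 2 := by
    intro t ht
    have h1 := hdiss t ht
    have h2 := (abs_le.mp (hδ t ht)).1
    have h3 := htail t ht
    have h4 := hKLchi t ht
    have h0 : (inner ℝ (g t - (K.orthogonalProjectionOnto (g t) : H))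
        (K.orthogonalProjectionOnto (g t) : H) : ℝ) = 0 :=
      K.starProjection_inner_eq_zero (g t) _ (K.orthogonalProjectionOnto (g t)).2
    rw [inner_sub_left, real_inner_self_eq_norm_sq] at h0
    have h5 := norm_sub_sq_real (g t) (K.orthogonalProjectionOnto (g t) : H)
    have h6 : ‖g t - (K.orthogonalProjectionOnto (g t) : H)‖ ^ 2 ≤ η ^ 2 :=
      pow_le_pow_left₀ (norm_nonneg _) h3 2
    have h7 := mul_le_mul_of_nonneg_left h4 hc.le
    linarith
  have hF : ∀ t, HasDerivAt (fun t => Real.exp ((1 - ε) * t) * (y t - η ^ 2 / (1 - ε)))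
      (Real.exp ((1 - ε) * t) * ((1 - ε) * 1) * (y t - η ^ 2 / (1 - ε))
        + Real.exp ((1 - ε) * t) * deriv y t) t := by
    intro t
    exact (((hasDerivAt_id t).const_mul (1 - ε)).exp).mul
      ((hy t).hasDerivAt.sub_const _)
  have hanti : AntitoneOn (fun t => Real.exp ((1 - ε) * t) * (y t - η ^ 2 / (1 - ε)))
      (Set.Ici 0) := by
    apply antitoneOn_of_deriv_nonpos (convex_Ici 0)
    · exact fun t _ => (hF t).continuousAt.continuousWithinAt
    · exact fun t _ => (hF t).differentiableAt.differentiableWithinAt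
    · intro t ht
      rw [interior_Ici] at ht
      rw [(hF t).deriv]
      have h := key t (le_of_lt ht)
      have e : Real.exp ((1 - ε) * t) * ((1 - ε) * 1) * (y t - η ^ 2 / (1 - ε))
        + Real.exp ((1 - ε) * t) * deriv y t
          = Real.exp ((1 - ε) * t) * ((1 - ε) * y t - η ^ 2 + deriv y t) := by
        field_simp
      rw [e]
      exact mul_nonpos_of_nonneg_of_nonpos (Real.exp_pos _).le (by linarith)
  intro t ht
  have h := hanti (Set.mem_Ici.mpr le_rfl) (Set.mem_Ici.mpr ht) ht
  simp only [mul_zero, Real.exp_zero, one_mul] at h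
  have h' := mul_le_mul_of_nonneg_left h (Real.exp_pos (-(1 - ε) * t)).le
  rw [← mul_assoc, ← Real.exp_add] at h'
  have e0 : -(1 - ε) * t + (1 - ε) * t = 0 := by ring
  rw [e0, Real.exp_zero, one_mul] at h'
  linarith
end
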